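/- arXiv:2204.11401 — 3 statements merged into one kernel-verified Lean document; each statement's English description precedes it below -/
import Mathlib

section
/- For all integers m, n ≥ 0 with m ≠ n, the sets P_m and P_n are disjoint; that is, no real number x satisfies both R_b^∘m(x) ∈ E_b and R_b^∘n(x) ∈ E_b. -/
open Set

/-- The spectral decimation function `R_b`. -/
noncomputable def Rb (b : ℕ) : ℝ → ℝ :=
  fun z => (z / (b : ℝ)) * (((b : ℝ) + 1) * z - (2 * (b : ℝ) + 1)) *
    (((b : ℝ) + 1) * z - ((b : ℝ) + 2))

/-- The exceptional set `E_b = {1/(b+1), (2b+1)/(b+1)}`. -/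
noncomputable def Eb (b : ℕ) : Set ℝ :=
  {1 / ((b : ℝ) + 1), (2 * (b : ℝ) + 1) / ((b : ℝ) + 1)}

/-- The `m`-th preimage set `P_m = {x : R_b^∘m(x) ∈ E_b}`. -/
noncomputable def Pm (b m : ℕ) : Set ℝ := {x : ℝ | (Rb b)^[m] x ∈ Eb b}

/-!
`R_b` sends `1/(b+1)` to `2` and `(2b+1)/(b+1)` to `0`, and both `0` and `2` are fixed points of
`R_b` outside `E_b`. Hence an orbit that meets `E_b` is trapped in `{0, 2}` from the next step on
and never returns to `E_b`.
-/

open scoped Function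

section Trapping

variable {α : Type*} {f : α → α} {s t : Set α}

theorem disjoint_preimage_iterate_succ (hst : MapsTo f s t) (ht : MapsTo f t t)
    (hd : Disjoint s t) (k : ℕ) : Disjoint s (f^[k + 1] ⁻¹' s) := by
  rw [disjoint_left]
  intro x hx hxs
  exact disjoint_left.mp hd hxs (ht.iterate k (hst hx))

theorem pairwise_disjoint_preimage_iterate (hst : MapsTo f s t) (ht : MapsTo f t t)
    (hd : Disjoint s t) : Pairwise (Disjoint on fun m : ℕ => f^[m] ⁻¹' s) := by
  rw [pairwise_disjoint_on]
  intro m n hmn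
  obtain ⟨k, rfl⟩ : ∃ k, n = (k + 1) + m := ⟨n - m - 1, by omega⟩
  rw [Function.iterate_add, preimage_comp]
  exact (disjoint_preimage_iterate_succ hst ht hd k).preimage f^[m]

end Trapping

section SpectralDecimation

variable {K : Type*} [Field K] {b : K}

/-- The spectral decimation function `R_b` with parameter `b` in an arbitrary field; for a natural
number `b` and `K = ℝ` it is definitionally `Rb b`. -/
def spectralDecimation (b z : K) : K :=
  (z / b) * ((b + 1) * z - (2 * b + 1)) * ((b + 1) * z - (b + 2))

/-- The exceptional set `E_b` with parameter `b` in an arbitrary field; for a natural number `b`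
and `K = ℝ` it is definitionally `Eb b`. -/
def exceptionalSet (b : K) : Set K :=
  {1 / (b + 1), (2 * b + 1) / (b + 1)}

theorem spectralDecimation_zero : spectralDecimation b 0 = 0 := by
  simp [spectralDecimation]

theorem spectralDecimation_two (hb : b ≠ 0) : spectralDecimation b 2 = 2 := by
  unfold spectralDecimation
  field_simp
  ring

theorem spectralDecimation_one_div (hb : b ≠ 0) (hb₁ : b + 1 ≠ 0) :
    spectralDecimation b (1 / (b + 1)) = 2 := by
  unfold spectralDecimation
  field_simp
  ring

theorem spectralDecimation_two_mul_add_one_div (hb₁ : b + 1 ≠ 0) :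
    spectralDecimation b ((2 * b + 1) / (b + 1)) = 0 := by
  simp [spectralDecimation, mul_div_cancel₀ _ hb₁]

theorem mapsTo_spectralDecimation_exceptionalSet (hb : b ≠ 0) (hb₁ : b + 1 ≠ 0) :
    MapsTo (spectralDecimation b) (exceptionalSet b) {0, 2} := by
  rintro x (rfl | rfl)
  · exact .inr (spectralDecimation_one_div hb hb₁)
  · exact .inl (spectralDecimation_two_mul_add_one_div hb₁)

theorem mapsTo_spectralDecimation_zero_two (hb : b ≠ 0) :
    MapsTo (spectralDecimation b) {0, 2} {0, 2} := by
  rintro x (rfl | rfl)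
  · exact .inl spectralDecimation_zero
  · exact .inr (spectralDecimation_two hb)

theorem zero_notMem_exceptionalSet (hb₁ : b + 1 ≠ 0) (hb₂ : 2 * b + 1 ≠ 0) :
    0 ∉ exceptionalSet b := by
  rintro (h | h)
  · exact one_div_ne_zero hb₁ h.symm
  · exact div_ne_zero hb₂ hb₁ h.symm

theorem two_notMem_exceptionalSet (hb₁ : b + 1 ≠ 0) (hb₂ : 2 * b + 1 ≠ 0) :
    2 ∉ exceptionalSet b := by
  rintro (h | h)
  · rw [eq_div_iff hb₁] at h
    exact hb₂ (by linear_combination h)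
  · rw [mem_singleton_iff, eq_div_iff hb₁] at h
    exact one_ne_zero (α := K) (by linear_combination h)

theorem disjoint_exceptionalSet_zero_two (hb₁ : b + 1 ≠ 0) (hb₂ : 2 * b + 1 ≠ 0) :
    Disjoint (exceptionalSet b) {0, 2} := by
  rw [disjoint_insert_right, disjoint_singleton_right]
  exact ⟨zero_notMem_exceptionalSet hb₁ hb₂, two_notMem_exceptionalSet hb₁ hb₂⟩

theorem preimage_sets_disjoint_general (hb : b ≠ 0) (hb₁ : b + 1 ≠ 0) (hb₂ : 2 * b + 1 ≠ 0) :
    Pairwise (Disjoint on fun m : ℕ => (spectralDecimation b)^[m] ⁻¹' exceptionalSet b) :=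
  pairwise_disjoint_preimage_iterate (mapsTo_spectralDecimation_exceptionalSet hb hb₁)
    (mapsTo_spectralDecimation_zero_two hb) (disjoint_exceptionalSet_zero_two hb₁ hb₂)

end SpectralDecimation

/-- For all `m ≠ n`, the sets `P_m` and `P_n` are disjoint: no real `x` satisfies both
`R_b^∘m(x) ∈ E_b` and `R_b^∘n(x) ∈ E_b`. -/
theorem preimage_sets_disjoint (b : ℕ) (hb : 2 ≤ b) :
    ∀ m n : ℕ, m ≠ n → Disjoint (Pm b m) (Pm b n) := by
  have hb₀ : (b : ℝ) ≠ 0 := Nat.cast_ne_zero.mpr (by omega)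
  exact preimage_sets_disjoint_general hb₀ (by positivity) (by positivity)
end

section
/- For every integer m ≥ 0, the set P_m is finite with exactly 2·3^m elements, and P_m ⊆ [0,2]. -/
open Set

/-! The cubic `R_b` runs from `0` to `2` on `[0, 1/(b+1)]`, from `2` to `0` on
`[b/(b+1), (b+2)/(b+1)]` and from `0` to `2` on `[(2b+1)/(b+1), 2]`. The interiors of these
intervals are disjoint, so every value in `(0, 2)` has a preimage in each of them and, the degree
being three, no other preimage. Pulling back a subset of `(0, 2)` therefore triples its cardinality
and stays inside `(0, 2)`, which contains `E_b`. -/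

section Fibers

variable {α β : Type*} {k : ℕ}

theorem encard_preimage_of_encard_fiber {f : α → β} {T : Set β}
    (hfiber : ∀ w ∈ T, (f ⁻¹' {w}).encard = k) : (f ⁻¹' T).encard = k * T.encard := by
  have fiberEquiv (w : T) : {x // f x = w} ≃ Fin k :=
    have : Finite {x // f x = w} := finite_of_encard_eq_coe (hfiber w w.2)
    Finite.equivFinOfCardEq (congrArg ENat.toNat (hfiber w w.2))
  have preimageEquiv : f ⁻¹' T ≃ T × Fin k :=
    (Equiv.sigmaSubtypeFiberEquivSubtype f fun _ => Iff.rfl).symm.trans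
      ((Equiv.sigmaCongrRight fiberEquiv).trans (Equiv.sigmaEquivProd T (Fin k)))
  calc (f ⁻¹' T).encard = ENat.card (T × Fin k) := ENat.card_congr preimageEquiv
    _ = k * T.encard := by rw [ENat.card_prod, ENat.card_coe_set_eq, mul_comm]; simp

theorem preimage_iterate_subset {f : α → α} {I S : Set α} (hI : f ⁻¹' I ⊆ I) (hS : S ⊆ I)
    (m : ℕ) : f^[m] ⁻¹' S ⊆ I := by
  induction m with
  | zero => exact hS
  | succ m ih => exact (preimage_mono ih).trans hI

theorem encard_preimage_iterate {f : α → α} {I S : Set α}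
    (hfiber : ∀ w ∈ I, (f ⁻¹' {w}).encard = k) (hI : f ⁻¹' I ⊆ I) (hS : S ⊆ I) (m : ℕ) :
    (f^[m] ⁻¹' S).encard = k ^ m * S.encard := by
  induction m with
  | zero => simp
  | succ m ih =>
    have hsub := preimage_iterate_subset hI hS m
    rw [Function.iterate_succ, preimage_comp,
      encard_preimage_of_encard_fiber fun w hw => hfiber w (hsub hw), ih, pow_succ', mul_assoc]

end Fibers

section Decimation

open Polynomial

theorem eval_preimage_singleton_eq_of_natDegree_le_card {R : Type*} [CommRing R] [IsDomain R]
    {p : R[X]} {w : R} {t : Finset R} (hp : p.natDegree ≠ 0) (ht : ∀ x ∈ t, p.eval x = w)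
    (hcard : p.natDegree ≤ t.card) : p.eval ⁻¹' {w} = (t : Set R) := by
  have hne : p - C w ≠ 0 := fun h => hp (by rw [← natDegree_sub_C (a := w), h, natDegree_zero])
  have hroots : (p - C w).roots = t.val :=
    roots_eq_of_natDegree_le_card_of_ne_zero (fun x hx => by simp [ht x hx])
      (by rwa [natDegree_sub_C]) hne
  ext x
  rw [Finset.mem_coe, ← Finset.mem_val, ← hroots, mem_roots hne]
  simp [sub_eq_zero]

/-- The spectral decimation function `R_β` as a cubic polynomial, for a real parameter `β`, so that
its fibers can be bounded by its degree. -/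
noncomputable def decimationPoly (β : ℝ) : ℝ[X] :=
  C β⁻¹ * X * (C (β + 1) * X - C (2 * β + 1)) * (C (β + 1) * X - C (β + 2))

variable {β : ℝ}

theorem eval_decimationPoly (z : ℝ) : (decimationPoly β).eval z =
    z / β * ((β + 1) * z - (2 * β + 1)) * ((β + 1) * z - (β + 2)) := by
  simp [decimationPoly, div_eq_inv_mul]

theorem natDegree_decimationPoly (hβ : β ≠ 0) (hβ₁ : β + 1 ≠ 0) :
    (decimationPoly β).natDegree = 3 := by
  unfold decimationPoly
  compute_degree!

theorem surjOn_decimationPoly_left (hβ : 0 < β) :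
    SurjOn (decimationPoly β).eval (Ioo 0 (1 / (β + 1))) (Ioo 0 2) := by
  have hzero : (decimationPoly β).eval 0 = 0 := by simp [eval_decimationPoly]
  have htwo : (decimationPoly β).eval (1 / (β + 1)) = 2 := by
    rw [eval_decimationPoly]; field_simp; ring
  have hivt := intermediate_value_Ioo (by positivity : (0 : ℝ) ≤ 1 / (β + 1))
    (decimationPoly β).continuousOn
  rwa [hzero, htwo] at hivt

theorem surjOn_decimationPoly_middle (hβ : 0 < β) :
    SurjOn (decimationPoly β).eval (Ioo (β / (β + 1)) ((β + 2) / (β + 1))) (Ioo 0 2) := by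
  have htwo : (decimationPoly β).eval (β / (β + 1)) = 2 := by
    rw [eval_decimationPoly]; field_simp; ring
  have hzero : (decimationPoly β).eval ((β + 2) / (β + 1)) = 0 := by
    rw [eval_decimationPoly]; field_simp; ring
  have hivt := intermediate_value_Ioo' (by gcongr; linarith : β / (β + 1) ≤ (β + 2) / (β + 1))
    (decimationPoly β).continuousOn
  rwa [htwo, hzero] at hivt

theorem surjOn_decimationPoly_right (hβ : 0 < β) :
    SurjOn (decimationPoly β).eval (Ioo ((2 * β + 1) / (β + 1)) 2) (Ioo 0 2) := by
  have hzero : (decimationPoly β).eval ((2 * β + 1) / (β + 1)) = 0 := by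
    rw [eval_decimationPoly]; field_simp; ring
  have htwo : (decimationPoly β).eval 2 = 2 := by
    rw [eval_decimationPoly]; field_simp; ring
  have hle : (2 * β + 1) / (β + 1) ≤ 2 := by rw [div_le_iff₀ (by positivity)]; linarith
  have hivt := intermediate_value_Ioo hle (decimationPoly β).continuousOn
  rwa [hzero, htwo] at hivt

theorem exists_fiber_decimationPoly_eq (hβ : 1 ≤ β) {w : ℝ} (hw : w ∈ Ioo (0 : ℝ) 2) :
    ∃ x y z : ℝ, 0 < x ∧ x < y ∧ y < z ∧ z < 2 ∧
      (decimationPoly β).eval ⁻¹' {w} = {x, y, z} := by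
  have hβ₀ : 0 < β := by linarith
  obtain ⟨x, ⟨hx₀, hx⟩, hxw⟩ := surjOn_decimationPoly_left hβ₀ hw
  obtain ⟨y, ⟨hy, hy'⟩, hyw⟩ := surjOn_decimationPoly_middle hβ₀ hw
  obtain ⟨z, ⟨hz, hz₂⟩, hzw⟩ := surjOn_decimationPoly_right hβ₀ hw
  have hxy : x < y := calc
    x < 1 / (β + 1) := hx
    _ ≤ β / (β + 1) := by gcongr
    _ < y := hy
  have hyz : y < z := calc
    y < (β + 2) / (β + 1) := hy'
    _ ≤ (2 * β + 1) / (β + 1) := by gcongr ?_ / _; linarith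
    _ < z := hz
  refine ⟨x, y, z, hx₀, hxy, hyz, hz₂, ?_⟩
  have hcard : ({x, y, z} : Finset ℝ).card = 3 :=
    Finset.card_eq_three.mpr ⟨x, y, z, hxy.ne, (hxy.trans hyz).ne, hyz.ne, rfl⟩
  have hdeg := natDegree_decimationPoly hβ₀.ne' (by positivity)
  simpa only [Finset.coe_insert, Finset.coe_singleton] using
    eval_preimage_singleton_eq_of_natDegree_le_card (t := {x, y, z}) (by lia)
      (by simp [hxw, hyw, hzw]) (hdeg.trans hcard.symm).le

theorem encard_fiber_decimationPoly (hβ : 1 ≤ β) {w : ℝ} (hw : w ∈ Ioo (0 : ℝ) 2) :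
    ((decimationPoly β).eval ⁻¹' {w}).encard = 3 := by
  obtain ⟨x, y, z, -, hxy, hyz, -, hfiber⟩ := exists_fiber_decimationPoly_eq hβ hw
  exact encard_eq_three.mpr ⟨x, y, z, hxy.ne, (hxy.trans hyz).ne, hyz.ne, hfiber⟩

theorem decimationPoly_preimage_Ioo_subset (hβ : 1 ≤ β) :
    (decimationPoly β).eval ⁻¹' Ioo 0 2 ⊆ Ioo 0 2 := by
  intro t ht
  obtain ⟨x, y, z, hx₀, hxy, hyz, hz₂, hfiber⟩ := exists_fiber_decimationPoly_eq hβ ht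
  have ht_mem : t ∈ ({x, y, z} : Set ℝ) := hfiber ▸ mem_singleton _
  rcases ht_mem with rfl | rfl | rfl <;> constructor <;> linarith

theorem preimage_sets_card_general (hβ : 1 ≤ β) {S : Set ℝ} (hS : S ⊆ Ioo 0 2) (m : ℕ) :
    ((decimationPoly β).eval^[m] ⁻¹' S).encard = 3 ^ m * S.encard ∧
      (decimationPoly β).eval^[m] ⁻¹' S ⊆ Ioo 0 2 :=
  have hI := decimationPoly_preimage_Ioo_subset hβ
  ⟨encard_preimage_iterate (fun _ => encard_fiber_decimationPoly hβ) hI hS m,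
    preimage_iterate_subset hI hS m⟩

end Decimation

theorem Rb_eq_eval_decimationPoly (b : ℕ) : Rb b = (decimationPoly b).eval :=
  funext fun z => (eval_decimationPoly z).symm

theorem encard_Eb {b : ℕ} (hb : b ≠ 0) : (Eb b).encard = 2 := by
  have hb₀ : (0 : ℝ) < b := by positivity
  have hlt : 1 / ((b : ℝ) + 1) < (2 * b + 1) / (b + 1) := by gcongr; linarith
  exact encard_pair hlt.ne

theorem Eb_subset_Ioo (b : ℕ) : Eb b ⊆ Ioo 0 2 := by
  have hb : (0 : ℝ) ≤ b := b.cast_nonneg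
  rintro _ (rfl | rfl)
  all_goals
    refine ⟨by positivity, ?_⟩
    rw [div_lt_iff₀ (by positivity)]
    linarith [hb]

/-- For every `m ≥ 0`, the set `P_m` is finite with exactly `2·3^m` elements, and
`P_m ⊆ [0,2]`. -/
theorem preimage_sets_card (b : ℕ) (hb : 2 ≤ b) :
    ∀ m : ℕ, (Pm b m).Finite ∧ (Pm b m).ncard = 2 * 3 ^ m ∧
      Pm b m ⊆ Icc (0 : ℝ) 2 := by
  intro m
  have hb₁ : (1 : ℝ) ≤ b := by exact_mod_cast one_le_two.trans hb
  obtain ⟨hcard, hsub⟩ := preimage_sets_card_general hb₁ (Eb_subset_Ioo b) m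
  rw [← Rb_eq_eval_decimationPoly] at hcard hsub
  have hPm : (Pm b m).encard = (2 * 3 ^ m : ℕ) := by
    rw [encard_Eb (by lia), mul_comm] at hcard
    exact_mod_cast hcard
  exact ⟨finite_of_encard_eq_coe hPm, congrArg ENat.toNat hPm, hsub.trans Ioo_subset_Icc_self⟩
end

section
/- The closure of ⋃_{m≥0} P_m equals the closure of ⋃_{n≥0} {x ∈ ℝ : R_b^∘n(x) ∈ {0, 2}}; that is, the closure of the set of all iterated R_b-preimages of the exceptional set E_b coincides with the closure of the backward orbit of the fixed points {0, 2} (both equal the Julia set of R_b). -/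
open Set

/-!
Since `R_b` maps `E_b` to the fixed points `0` and `2`, one inclusion is clear. For the other, note
that the value of `R_b` at a critical point lies outside `[0, 2]`, so that `R_b` is a local
homeomorphism at every point of `R_b⁻¹[0, 2] ⊆ [0, 2]`; hence the closure of the backward orbit of
`E_b` can be pulled back along `R_b` inside `[0, 2]`, and it only has to contain `0` and `2`. As
`x < R_b x` on `(0, 1 / (b + 1)]`, the least element of that closure in `[0, 1 / (b + 1)]` has a
preimage which is smaller unless it is `0`. So `0` is in the closure, and `2` is too because of the
symmetry `x ↦ 2 - x`.
-/

open Filter Topology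

section BackwardOrbit

variable {X : Type*} {f g : X → X} {A B T : Set X} {x : X}

/-- The backward orbit of a set `A` under `f`: the points that some iterate of `f`, possibly the
zeroth, sends into `A`. -/
def backwardOrbit (f : X → X) (A : Set X) : Set X := ⋃ n : ℕ, f^[n] ⁻¹' A

lemma mem_backwardOrbit : x ∈ backwardOrbit f A ↔ ∃ n : ℕ, f^[n] x ∈ A := mem_iUnion

lemma subset_backwardOrbit : A ⊆ backwardOrbit f A := fun _ hx ↦ mem_backwardOrbit.2 ⟨0, hx⟩

lemma preimage_backwardOrbit_subset : f ⁻¹' backwardOrbit f A ⊆ backwardOrbit f A := fun _ hx ↦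
  let ⟨n, hn⟩ := mem_backwardOrbit.1 hx
  mem_backwardOrbit.2 ⟨n + 1, hn⟩

lemma backwardOrbit_subset (hA : A ⊆ T) (hT : f ⁻¹' T ⊆ T) : backwardOrbit f A ⊆ T := by
  refine iUnion_subset fun n ↦ ?_
  induction n with
  | zero => exact hA
  | succ n ih => exact fun x hx ↦ hT (ih hx)

lemma backwardOrbit_subset_backwardOrbit (h : MapsTo f A B) :
    backwardOrbit f A ⊆ backwardOrbit f B :=
  backwardOrbit_subset (fun _ hx ↦ preimage_backwardOrbit_subset (subset_backwardOrbit (h hx)))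
    preimage_backwardOrbit_subset

lemma mapsTo_backwardOrbit_of_commute (hfg : Function.Commute f g) (hg : MapsTo g A A) :
    MapsTo g (backwardOrbit f A) (backwardOrbit f A) := by
  intro x hx
  obtain ⟨n, hn⟩ := mem_backwardOrbit.1 hx
  refine mem_backwardOrbit.2 ⟨n, ?_⟩
  rw [hfg.iterate_left n x]
  exact hg hn

end BackwardOrbit

section Topology

lemma mem_closure_preimage_of_nhds_le_map {X Y : Type*} [TopologicalSpace X] [TopologicalSpace Y]
    {f : X → Y} {S : Set Y} {x : X} (hf : 𝓝 (f x) ≤ map f (𝓝 x)) (hx : f x ∈ closure S) :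
    x ∈ closure (f ⁻¹' S) := by
  rw [mem_closure_iff_frequently] at hx ⊢
  exact frequently_map.1 (hx.filter_mono hf)

lemma mem_of_isClosed_of_lt_map {α : Type*} [ConditionallyCompleteLinearOrder α]
    [TopologicalSpace α] [OrderTopology α] [DenselyOrdered α] {f : α → α} {p a : α} {T : Set α}
    (hf : ContinuousOn f (Icc p a)) (hp : f p = p) (hlt : ∀ x ∈ Ioc p a, x < f x)
    (hT : IsClosed T) (hne : (Icc p a ∩ T).Nonempty)
    (hpull : ∀ x ∈ Icc p a, f x ∈ T → x ∈ T) : p ∈ T := by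
  obtain ⟨c, ⟨⟨hpc, hca⟩, hcT⟩, hc_le⟩ := (isCompact_Icc.inter_right hT).exists_isLeast hne
  rcases hpc.eq_or_lt with rfl | hpc
  · exact hcT
  have hpa : p < a := hpc.trans_le hca
  have hc_mem : c ∈ Icc (f p) (f a) :=
    ⟨hp.trans_le hpc.le, hca.trans (hlt a ⟨hpa, le_rfl⟩).le⟩
  obtain ⟨z, hz, rfl⟩ := intermediate_value_Icc hpa.le hf hc_mem
  have hzT : z ∈ T := hpull z hz hcT
  rcases hz.1.eq_or_lt with rfl | hpz
  · exact hzT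
  · exact absurd (hlt z ⟨hpz, hz.2⟩) (hc_le ⟨hz, hzT⟩).not_gt

end Topology

section SpectralDecimation

variable {b : ℕ} {x : ℝ}

lemma Rb_zero (b : ℕ) : Rb b 0 = 0 := by simp [Rb]

lemma continuous_Rb (b : ℕ) : Continuous (Rb b) := by
  unfold Rb
  fun_prop

lemma Rb_two_sub (hb : b ≠ 0) (x : ℝ) : Rb b (2 - x) = 2 - Rb b x := by
  simp only [Rb]
  field_simp
  ring

lemma mapsTo_two_sub_Eb (b : ℕ) : MapsTo (fun x ↦ 2 - x) (Eb b) (Eb b) := by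
  rintro _ (rfl | rfl)
  · right
    rw [mem_singleton_iff]
    field_simp
    ring
  · left
    field_simp
    ring

lemma mapsTo_Rb_Eb (hb : b ≠ 0) : MapsTo (Rb b) (Eb b) {0, 2} := by
  rintro _ (rfl | rfl)
  · right
    simp only [Rb, mem_singleton_iff]
    field_simp
    ring
  · left
    simp only [Rb]
    field_simp
    ring

lemma Rb_neg_of_neg (hb : b ≠ 0) (hx : x < 0) : Rb b x < 0 := by
  have hb₀ : (0 : ℝ) < b := by positivity
  have hbx : ((b : ℝ) + 1) * x < 0 := mul_neg_of_pos_of_neg (by positivity) hx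
  exact mul_neg_of_pos_of_neg
    (mul_pos_of_neg_of_neg (div_neg_of_neg_of_pos hx hb₀) (by linarith)) (by linarith)

lemma preimage_Rb_Icc_subset (hb : b ≠ 0) : Rb b ⁻¹' Icc 0 2 ⊆ Icc 0 2 := by
  rintro x ⟨h0, h2⟩
  refine ⟨le_of_not_gt fun hx ↦ (Rb_neg_of_neg hb hx).not_ge h0, le_of_not_gt fun hx ↦ ?_⟩
  have h_neg : Rb b (2 - x) < 0 := Rb_neg_of_neg hb (by linarith)
  rw [Rb_two_sub hb] at h_neg
  linarith

lemma lt_Rb_of_mem_Ioc (hb : b ≠ 0) (hx : x ∈ Ioc 0 (1 / ((b : ℝ) + 1))) : x < Rb b x := by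
  have hb₀ : (0 : ℝ) < b := by positivity
  have hbx : ((b : ℝ) + 1) * x ≤ 1 := (le_div_iff₀' (by positivity)).1 hx.2
  have h_factors : 2 * (b : ℝ) * (b + 1) ≤
      (2 * b + 1 - (b + 1) * x) * (b + 2 - (b + 1) * x) :=
    mul_le_mul (by linarith) (by linarith) (by positivity) (by linarith)
  calc x < x / b * (2 * b * (b + 1)) := by
        field_simp
        nlinarith [hx.1]
    _ ≤ x / b * ((2 * b + 1 - (b + 1) * x) * (b + 2 - (b + 1) * x)) :=
        mul_le_mul_of_nonneg_left h_factors (div_nonneg hx.1.le hb₀.le)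
    _ = Rb b x := by rw [Rb]; ring

lemma hasStrictDerivAt_Rb (hb : b ≠ 0) (x : ℝ) :
    HasStrictDerivAt (Rb b)
      ((3 * (((b : ℝ) + 1) * (x - 1)) ^ 2 - ((b : ℝ) ^ 2 + b + 1)) / b) x := by
  have hid := hasStrictDerivAt_id x
  have h := ((hid.div_const (b : ℝ)).mul
    ((hid.const_mul ((b : ℝ) + 1)).sub_const (2 * (b : ℝ) + 1))).mul
    ((hid.const_mul ((b : ℝ) + 1)).sub_const ((b : ℝ) + 2))
  refine HasStrictDerivAt.congr_deriv (f := Rb b) h ?_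
  simp only [id, Pi.mul_apply]
  field_simp
  ring

-- The three factors come from pairing each root `x` of `R_b` with the root `2 - x` of `2 - R_b`.
lemma Rb_mul_two_sub_Rb (hb : b ≠ 0) (x : ℝ) :
    Rb b x * (2 - Rb b x) =
      (((b : ℝ) + 1) ^ 2 - (((b : ℝ) + 1) * (x - 1)) ^ 2) *
        ((((b : ℝ) + 1) * (x - 1)) ^ 2 - (b : ℝ) ^ 2) * ((((b : ℝ) + 1) * (x - 1)) ^ 2 - 1) /
        (b * (b + 1)) ^ 2 := by
  simp only [Rb]
  field_simp
  ring

lemma Rb_notMem_Icc_of_critical (hb : 1 < b)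
    (hx : 3 * (((b : ℝ) + 1) * (x - 1)) ^ 2 = (b : ℝ) ^ 2 + b + 1) : Rb b x ∉ Icc 0 2 := by
  have hb₀ : b ≠ 0 := by lia
  have hb₁ : (0 : ℝ) < b - 1 := sub_pos.2 (by exact_mod_cast hb)
  rintro ⟨h0, h2⟩
  have h_neg : Rb b x * (2 - Rb b x) < 0 := by
    have hu : (((b : ℝ) + 1) * (x - 1)) ^ 2 = ((b : ℝ) ^ 2 + b + 1) / 3 := by linarith
    calc Rb b x * (2 - Rb b x)
        = -(((2 * b + 1) * (b + 2) * (b - 1)) ^ 2 / (27 * (b * (b + 1)) ^ 2)) := by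
          rw [Rb_mul_two_sub_Rb hb₀, hu]
          field_simp
          ring
      _ < 0 := neg_neg_of_pos (by positivity)
  exact h_neg.not_ge (mul_nonneg h0 (sub_nonneg.2 h2))

lemma map_Rb_nhds (hb : 1 < b) (hx : Rb b x ∈ Icc 0 2) : map (Rb b) (𝓝 x) = 𝓝 (Rb b x) := by
  have hb₀ : b ≠ 0 := by lia
  refine (hasStrictDerivAt_Rb hb₀ x).map_nhds_eq (div_ne_zero (fun h ↦ ?_) (by positivity))
  exact Rb_notMem_Icc_of_critical hb (sub_eq_zero.1 h) hx

lemma preimage_Rb_Icc_inter_closure_backwardOrbit_subset (hb : 1 < b) (A : Set ℝ) :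
    Rb b ⁻¹' (Icc 0 2 ∩ closure (backwardOrbit (Rb b) A)) ⊆
      Icc 0 2 ∩ closure (backwardOrbit (Rb b) A) := fun _ ⟨hx, hx_cl⟩ ↦
  ⟨preimage_Rb_Icc_subset (by lia) hx, closure_mono preimage_backwardOrbit_subset
    (mem_closure_preimage_of_nhds_le_map (map_Rb_nhds hb hx).ge hx_cl)⟩

lemma zero_mem_closure_backwardOrbit_Eb (hb : 1 < b) :
    (0 : ℝ) ∈ closure (backwardOrbit (Rb b) (Eb b)) := by
  have ha₀ : 0 ≤ 1 / ((b : ℝ) + 1) := by positivity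
  have ha₂ : 1 / ((b : ℝ) + 1) ≤ 2 := by
    rw [div_le_iff₀ (by positivity)]
    linarith [b.cast_nonneg (α := ℝ)]
  have ha_mem : 1 / ((b : ℝ) + 1) ∈ backwardOrbit (Rb b) (Eb b) :=
    subset_backwardOrbit (mem_insert _ _)
  have h_zero : (0 : ℝ) ∈ Icc 0 2 ∩ closure (backwardOrbit (Rb b) (Eb b)) :=
    mem_of_isClosed_of_lt_map (continuous_Rb b).continuousOn (Rb_zero b)
      (fun x hx ↦ lt_Rb_of_mem_Ioc (by lia) hx) (isClosed_Icc.inter isClosed_closure)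
      ⟨_, ⟨ha₀, le_rfl⟩, ⟨ha₀, ha₂⟩, subset_closure ha_mem⟩
      fun _ _ hx ↦ preimage_Rb_Icc_inter_closure_backwardOrbit_subset hb _ hx
  exact h_zero.2

lemma two_mem_closure_backwardOrbit_Eb (hb : 1 < b) :
    (2 : ℝ) ∈ closure (backwardOrbit (Rb b) (Eb b)) := by
  have h_commute : Function.Commute (Rb b) (fun x ↦ 2 - x) := Rb_two_sub (by lia)
  have h_maps := mapsTo_backwardOrbit_of_commute h_commute (mapsTo_two_sub_Eb b)
  simpa using h_maps.closure (by fun_prop) (zero_mem_closure_backwardOrbit_Eb hb)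

end SpectralDecimation

/-- The closure of `⋃_{m≥0} P_m` (the iterated preimages of the exceptional set)
coincides with the closure of the backward orbit of the fixed points `{0, 2}`; both
equal the Julia set of `R_b`. -/
theorem closure_preimages_eq_closure_backward_orbit (b : ℕ) (hb : 2 ≤ b) :
    closure (⋃ m : ℕ, Pm b m) =
      closure (⋃ n : ℕ, {x : ℝ | (Rb b)^[n] x ∈ ({0, 2} : Set ℝ)}) := by
  change closure (backwardOrbit (Rb b) (Eb b)) = closure (backwardOrbit (Rb b) {0, 2})
  have h_fixed : {0, 2} ⊆ Icc 0 2 ∩ closure (backwardOrbit (Rb b) (Eb b)) := by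
    rintro _ (rfl | rfl)
    · exact ⟨by simp, zero_mem_closure_backwardOrbit_Eb hb⟩
    · exact ⟨by simp, two_mem_closure_backwardOrbit_Eb hb⟩
  have h_orbit : backwardOrbit (Rb b) {0, 2} ⊆ Icc 0 2 ∩ closure (backwardOrbit (Rb b) (Eb b)) :=
    backwardOrbit_subset h_fixed (preimage_Rb_Icc_inter_closure_backwardOrbit_subset hb _)
  apply Subset.antisymm
  · exact closure_mono (backwardOrbit_subset_backwardOrbit (mapsTo_Rb_Eb (by lia)))
  · exact closure_minimal (h_orbit.trans inter_subset_right) isClosed_closure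
end
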